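/- Let d ≥ 1, g ≥ 1 and D : Fin g → ℕ with D k ≥ 1 for all k. Suppose given, for each k ∈ Fin g, families A k : Fin d → Fin d → Matrix (Fin (D k)) (Fin (D k)) ℂ and Ainv k : Fin d → Fin d → Matrix (Fin (D k)) (Fin (D k)) ℂ satisfying the biorthogonality relation: for all k, l ∈ Fin g, all a, b ∈ Fin (D k) and all a', b' ∈ Fin (D l), Σ_{i, j ∈ Fin d} ((A k)^{i j})_{a b} · ((Ainv l)^{i j})_{a' b'} equals δ_{a a'} · δ_{b b'} if k = l and 0 otherwise. Let b k ∈ Matrix (Fin (D k)) (Fin (D k)) ℂ be invertible for every k. If the matrices v k ∈ Matrix (Fin (D k)) (Fin (D k)) ℂ satisfy Σ_{k ∈ Fin g} trace((A k)^{i j} * (v k)ᵀ * (b k)) = 0 for all i, j ∈ Fin d, then v k = 0 for every k. -/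

import Mathlib

open Matrix

theorem contract_aux {d m : ℕ} (A : Fin d → Fin d → Matrix (Fin m) (Fin m) ℂ)
    (c : Fin d → Fin d → ℂ) (X : Matrix (Fin m) (Fin m) ℂ) :
    (∑ i, ∑ j, (A i j * X).trace * c i j)
      = ∑ a, ∑ b, (∑ i, ∑ j, A i j a b * c i j) * X b a := by
  simp only [Matrix.trace, Matrix.diag, Matrix.mul_apply, Finset.sum_mul]
  have h1 : ∀ i, (∑ j, ∑ a, ∑ b, A i j a b * X b a * c i j)
      = ∑ a, ∑ b, ∑ j, A i j a b * c i j * X b a := by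
    intro i
    rw [Finset.sum_comm]
    refine Finset.sum_congr rfl fun a _ => ?_
    rw [Finset.sum_comm]
    refine Finset.sum_congr rfl fun b _ => Finset.sum_congr rfl fun j _ => ?_
    ring
  simp only [h1]
  rw [Finset.sum_comm]
  refine Finset.sum_congr rfl fun a _ => ?_
  rw [Finset.sum_comm]

/-- **Block-diagonal uniform-bulk MPUs satisfy Assumption 1** (supplemental material):
if the blocks `A k` form a biorthogonal family (a basis of normal tensors with inverse
tensors `Ainv k`), the block boundary operators `bdry k` are invertible, and the matrices
`v k` satisfy `∑ k, tr (A k i j * (v k)ᵀ * bdry k) = 0` for all physical indices `i, j`,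
then all `v k` vanish. -/
theorem block_diagonal_mpu_boundary_full_rank (d g : ℕ) (hd : 1 ≤ d) (hg : 1 ≤ g)
    (D : Fin g → ℕ) (hD : ∀ k, 1 ≤ D k)
    (A Ainv : (k : Fin g) → Fin d → Fin d → Matrix (Fin (D k)) (Fin (D k)) ℂ)
    (hbi_same : ∀ (k : Fin g) (a b a' b' : Fin (D k)),
      (∑ i : Fin d, ∑ j : Fin d, A k i j a b * Ainv k i j a' b')
        = (if a = a' then 1 else 0) * (if b = b' then 1 else 0))
    (hbi_diff : ∀ (k l : Fin g), k ≠ l → ∀ (a b : Fin (D k)) (a' b' : Fin (D l)),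
      (∑ i : Fin d, ∑ j : Fin d, A k i j a b * Ainv l i j a' b') = 0)
    (bdry : (k : Fin g) → Matrix (Fin (D k)) (Fin (D k)) ℂ)
    (hbdry : ∀ k, IsUnit (bdry k))
    (v : (k : Fin g) → Matrix (Fin (D k)) (Fin (D k)) ℂ)
    (hv : ∀ i j : Fin d, (∑ k : Fin g, (A k i j * (v k)ᵀ * bdry k).trace) = 0) :
    ∀ k, v k = 0 := by
  intro l
  have hX : (v l)ᵀ * bdry l = 0 := by
    ext b' a'
    have h0 : (∑ i, ∑ j, (∑ k : Fin g, (A k i j * ((v k)ᵀ * bdry k)).trace)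
        * Ainv l i j a' b') = 0 := by
      simp only [← Matrix.mul_assoc, hv, zero_mul, Finset.sum_const_zero]
    have h1 : (∑ i, ∑ j, (∑ k : Fin g, (A k i j * ((v k)ᵀ * bdry k)).trace)
        * Ainv l i j a' b')
        = ∑ k : Fin g, ∑ i, ∑ j, (A k i j * ((v k)ᵀ * bdry k)).trace * Ainv l i j a' b' := by
      simp only [Finset.sum_mul]
      refine Eq.trans (Finset.sum_congr rfl fun i _ => Finset.sum_comm) ?_
      rw [Finset.sum_comm]
    rw [h1, Finset.sum_eq_single l] at h0
    · rw [contract_aux (A l) (fun i j => Ainv l i j a' b')] at h0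
      simpa [hbi_same] using h0
    · intro k _ hk
      rw [contract_aux (A k) (fun i j => Ainv l i j a' b')]
      simp [hbi_diff k l hk]
    · simp
  have hT : (v l)ᵀ = 0 := (hbdry l).mul_left_eq_zero.mp hX
  simpa using hT
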